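/- arXiv:math/0004018 — 2 statements merged into one kernel-verified Lean document; each statement's English description precedes it below -/
import Mathlib

section
/- (The discrete Euler–Poincaré equations for the rigid body Lagrangian ℓ(f) = Tr(fΛ) are equivalent to the Moser–Veselov equations.) Let Λ be a symmetric 3×3 real matrix and let ω, ω' be 3×3 real matrices. Then the following are equivalent: (i) for every skew-symmetric 3×3 matrix ξ, Tr(ω' ξ Λ) = Tr(ξ ω Λ) (these two traces being the left-translated differential of ℓ at ω' and the right-translated differential of ℓ at ω evaluated at ξ, i.e. the two sides of the discrete Euler–Poincaré equation); (ii) Λω' − ω'ᵀΛ = ωΛ − Λωᵀ (the Moser–Veselov equation). -/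
open Matrix

/-- The discrete Euler–Poincaré equations for the rigid-body Lagrangian
`ℓ (f) = Tr (f Λ)` are equivalent to the Moser–Veselov equations: for symmetric `Λ`,
`Tr (ω' ξ Λ) = Tr (ξ ω Λ)` for every skew-symmetric `ξ` (the discrete Euler–Poincaré
equation `L*_{ω'} ℓ'(ω') = R*_ω ℓ'(ω)`) if and only if
`Λ ω' − ω'ᵀ Λ = ω Λ − Λ ωᵀ` (the Moser–Veselov equation). -/
theorem discrete_EP_iff_moser_veselov
    (Λ ω ω' : Matrix (Fin 3) (Fin 3) ℝ) (hΛ : Λᵀ = Λ) :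
    (∀ ξ : Matrix (Fin 3) (Fin 3) ℝ, ξᵀ = -ξ →
        (ω' * ξ * Λ).trace = (ξ * ω * Λ).trace)
      ↔ Λ * ω' - ω'ᵀ * Λ = ω * Λ - Λ * ωᵀ := by
  obtain ⟨B, hB⟩ : ∃ B, B = Λ * ω' - ω * Λ := ⟨_, rfl⟩
  have h1 : ∀ ξ : Matrix (Fin 3) (Fin 3) ℝ,
      (ω' * ξ * Λ).trace - (ξ * ω * Λ).trace = (ξ * B).trace := by
    intro ξ
    rw [hB, mul_sub, trace_sub, trace_mul_comm (ω' * ξ), ← mul_assoc, trace_mul_comm (Λ * ω'),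
      mul_assoc ξ ω]
  have h2 : ∀ ξ : Matrix (Fin 3) (Fin 3) ℝ, ξᵀ = -ξ → (ξ * Bᵀ).trace = -(ξ * B).trace := by
    intro ξ hξ
    rw [← trace_transpose, transpose_mul, transpose_transpose, hξ, mul_neg, trace_neg,
      trace_mul_comm]
  have h3 : (Λ * ω' - ω'ᵀ * Λ) - (ω * Λ - Λ * ωᵀ) = B - Bᵀ := by
    rw [hB, transpose_sub, transpose_mul, transpose_mul, hΛ]
    abel
  rw [← sub_eq_zero (a := Λ * ω' - ω'ᵀ * Λ), h3]
  constructor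
  · intro h
    have hs : (B - Bᵀ)ᵀ = -(B - Bᵀ) := by
      rw [transpose_sub, transpose_transpose, neg_sub]
    have h4 : ((B - Bᵀ) * B).trace = 0 := by
      rw [← h1, h _ hs, sub_self]
    have h5 := h2 _ hs
    rw [← trace_conjTranspose_mul_self_eq_zero_iff, conjTranspose_eq_transpose_of_trivial, hs,
      neg_mul, trace_neg]
    rw [mul_sub, trace_sub, h5, h4]
    simp
  · intro h ξ hξ
    have h5 := h2 ξ hξ
    rw [← sub_eq_zero.mp h] at h5
    have := h1 ξ
    linarith
end

section
/- (Invariance of the symplectic leaves: the Casimir C_SO(3) is conserved by the discrete Euler–Poincaré algorithm for the rigid body.) Let Λ be a symmetric 3×3 real matrix and let (ω_k)_{k≥0} be a sequence of orthogonal 3×3 real matrices (ω_kᵀω_k = ω_kω_kᵀ = 1) satisfying the Moser–Veselov equations Λω_{k+1} − ω_{k+1}ᵀΛ = ω_kΛ − Λω_kᵀ for all k ≥ 0. Then the Casimir function C_SO(3)(ω_k) = Tr(ω_k Λ ω_k Λ) is independent of k; equivalently, Tr((Λω_k − ω_kᵀΛ)²) is independent of k. -/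
open Matrix

theorem trT_aux (L w : Matrix (Fin 3) (Fin 3) ℝ) (hL : Lᵀ = L) :
    (wᵀ * L * wᵀ * L).trace = (w * L * w * L).trace := by
  rw [← Matrix.trace_transpose]
  simp only [Matrix.transpose_mul, Matrix.transpose_transpose, hL]
  rw [Matrix.trace_mul_comm, ← Matrix.mul_assoc]

theorem left_aux (L w : Matrix (Fin 3) (Fin 3) ℝ) (hL : Lᵀ = L) (h : w * wᵀ = 1) :
    ((L * w - wᵀ * L) * (L * w - wᵀ * L)).trace
      = 2 * (w * L * w * L).trace - 2 * (L * L).trace := by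
  have e1 : (L * w * (L * w)).trace = (w * L * w * L).trace := by
    rw [Matrix.mul_assoc L, Matrix.trace_mul_comm]
    simp only [Matrix.mul_assoc]
  have e2 : (L * w * (wᵀ * L)).trace = (L * L).trace := by
    rw [Matrix.mul_assoc, ← Matrix.mul_assoc w, h, Matrix.one_mul]
  have e3 : (wᵀ * L * (L * w)).trace = (L * L).trace := by
    rw [Matrix.trace_mul_comm, e2]
  have e4 : (wᵀ * L * (wᵀ * L)).trace = (w * L * w * L).trace := by
    rw [← trT_aux L w hL, ← Matrix.mul_assoc]
  simp only [Matrix.sub_mul, Matrix.mul_sub, Matrix.trace_sub, e1, e2, e3, e4]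
  ring

theorem right_aux (L w : Matrix (Fin 3) (Fin 3) ℝ) (hL : Lᵀ = L) (h : wᵀ * w = 1) :
    ((w * L - L * wᵀ) * (w * L - L * wᵀ)).trace
      = 2 * (w * L * w * L).trace - 2 * (L * L).trace := by
  have := left_aux L wᵀ hL (by rwa [Matrix.transpose_transpose])
  rw [Matrix.transpose_transpose, trT_aux L w hL] at this
  rw [← this, ← neg_sub (L * wᵀ) (w * L), neg_mul_neg]

/-- Invariance of the symplectic leaves: the Casimir `C_SO(3) (f) = Tr (f Λ f Λ)` is
conserved by the discrete Euler–Poincaré algorithm for the rigid body.  If `(ω_k)` is a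
sequence of orthogonal matrices satisfying the Moser–Veselov equations
`Λ ω_{k+1} − ω_{k+1}ᵀ Λ = ω_k Λ − Λ ω_kᵀ`, then `Tr (ω_k Λ ω_k Λ)` is independent of
`k`; equivalently, `Tr ((Λ ω_k − ω_kᵀ Λ)²)` is independent of `k`. -/
theorem casimir_conserved_moser_veselov
    (Λ : Matrix (Fin 3) (Fin 3) ℝ) (hΛ : Λᵀ = Λ)
    (ω : ℕ → Matrix (Fin 3) (Fin 3) ℝ)
    (hω₁ : ∀ k, (ω k)ᵀ * ω k = 1) (hω₂ : ∀ k, ω k * (ω k)ᵀ = 1)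
    (hMV : ∀ k, Λ * ω (k + 1) - (ω (k + 1))ᵀ * Λ = ω k * Λ - Λ * (ω k)ᵀ) :
    (∀ k, (ω k * Λ * ω k * Λ).trace = (ω 0 * Λ * ω 0 * Λ).trace) ∧
    (∀ k, ((Λ * ω k - (ω k)ᵀ * Λ) * (Λ * ω k - (ω k)ᵀ * Λ)).trace
        = ((Λ * ω 0 - (ω 0)ᵀ * Λ) * (Λ * ω 0 - (ω 0)ᵀ * Λ)).trace) := by
  have key : ∀ k, (ω k * Λ * ω k * Λ).trace = (ω 0 * Λ * ω 0 * Λ).trace := by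
    intro k
    induction k with
    | zero => rfl
    | succ k ih =>
      have h1 := left_aux Λ (ω (k + 1)) hΛ (hω₂ _)
      rw [hMV k, right_aux Λ (ω k) hΛ (hω₁ k)] at h1
      linarith
  refine ⟨key, fun k => ?_⟩
  rw [left_aux Λ (ω k) hΛ (hω₂ k), left_aux Λ (ω 0) hΛ (hω₂ 0), key k]
end
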